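/- Let a, b be coprime positive integers with a < b, and let r = a/b. Then the two-dimensional Lebesgue measure of the region R_r = {(p,q) ∈ T : 0 < S(p,q) < r} equals the integral ∫₀¹ b·(x^a − 1)²·x^{b−1} / (2·(x^{a+b} − 1)²) dx. -/

import Mathlib

open Real Set

/-- The parameter space `T = {(p,q) : 0 ≤ p ≤ q, p + q < 1} \ {(0,0)}`. -/
def bacT : Set (ℝ × ℝ) := {pq | 0 ≤ pq.1 ∧ pq.1 ≤ pq.2 ∧ pq.1 + pq.2 < 1 ∧ pq ≠ (0, 0)}

/-- The BAC-function `S`. -/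
noncomputable def bacS (p q : ℝ) : ℝ :=
  if p = 0 then 0 else (Real.log (1 - p) - Real.log q) / (Real.log (1 - q) - Real.log p)

/-- Transition probability of the n-fold binary asymmetric channel `BAC^n(p,q)`:
`bacPr p q x y = Pr(x|y)`. -/
noncomputable def bacPr (p q : ℝ) {n : ℕ} (x y : Fin n → Bool) : ℝ :=
  ∏ i, if x i then (if y i then 1 - q else p) else (if y i then q else 1 - p)

/-- The channels `BAC(p,q)` and `BAC(p',q')` are `n`-equivalent. -/
def nEquiv (n : ℕ) (p q p' q' : ℝ) : Prop :=
  ∀ x y z : Fin n → Bool,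
    (bacPr p q x y ≤ bacPr p q x z ↔ bacPr p' q' x y ≤ bacPr p' q' x z)

/-- A point `(p,q) ∈ T` is `n`-stable if all nearby points of `T` are `n`-equivalent to it. -/
def nStable (n : ℕ) (pq : ℝ × ℝ) : Prop :=
  ∃ ε > 0, ∀ pq' ∈ bacT, ‖pq' - pq‖ < ε → nEquiv n pq.1 pq.2 pq'.1 pq'.2

lemma bacS_lt_iff (a b : ℕ) (ha : 0 < a) (hb : 0 < b) (x s : ℝ) (hx0 : 0 < x) (hx1 : x < 1)
    (hs0 : 0 < s) (hs1 : s < 1) :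
    0 < bacS (s * x ^ b) (1 - s) ∧
    (bacS (s * x ^ b) (1 - s) < (a : ℝ) / b ↔ s * (1 - x ^ (a + b)) < 1 - x ^ a) := by
  have hxb0 : 0 < x ^ b := by positivity
  have hxa0 : 0 < x ^ a := by positivity
  have hxb1 : x ^ b < 1 := pow_lt_one₀ hx0.le hx1 hb.ne'
  have hp : 0 < s * x ^ b := by positivity
  have hps : s * x ^ b < s := by nlinarith
  have hlx : Real.log x < 0 := Real.log_neg hx0 hx1
  have hb' : (0:ℝ) < b := by exact_mod_cast hb
  have hden : Real.log (1 - (1 - s)) - Real.log (s * x ^ b) = - (b * Real.log x) := by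
    rw [Real.log_mul hs0.ne' hxb0.ne', Real.log_pow]; ring_nf
  have hnum : 0 < Real.log (1 - s * x ^ b) - Real.log (1 - s) := by
    have := Real.log_lt_log (by linarith : 0 < 1 - s) (by linarith : 1 - s < 1 - s * x ^ b)
    linarith
  have hdp : 0 < -(b * Real.log x) := by nlinarith
  unfold bacS
  rw [if_neg hp.ne', hden]
  refine ⟨div_pos hnum hdp, ?_⟩
  rw [div_lt_div_iff₀ hdp hb']
  have e1 : (Real.log (1 - s * x ^ b) - Real.log (1 - s)) * b < a * -(b * Real.log x) ↔
      Real.log ((1 - s * x ^ b) * x ^ a) < Real.log (1 - s) := by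
    rw [Real.log_mul (by linarith) hxa0.ne', Real.log_pow]
    constructor
    · intro h
      have : b * (Real.log (1 - s * x ^ b) + a * Real.log x) < b * Real.log (1 - s) := by linarith
      exact lt_of_mul_lt_mul_left this hb'.le
    · intro h
      have := mul_lt_mul_of_pos_left h hb'
      linarith
  rw [e1, Real.log_lt_log_iff (mul_pos (by linarith) hxa0) (by linarith), pow_add]
  constructor <;> intro h <;> linarith

def bacD (a b : ℕ) : Set (ℝ × ℝ) :=
  {z | 0 < z.1 ∧ z.1 < 1 ∧ 0 < z.2 ∧ z.2 * (1 - z.1 ^ (a + b)) < 1 - z.1 ^ a}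

def bacF (b : ℕ) (z : ℝ × ℝ) : ℝ × ℝ := (z.2 * z.1 ^ b, 1 - z.2)

lemma bacD_lt_one (a b : ℕ) (z : ℝ × ℝ) (hz : z ∈ bacD a b) (ha : 0 < a) : z.2 < 1 := by
  obtain ⟨h0, h1, h2, h3⟩ := hz
  have : z.1 ^ (a + b) ≤ z.1 ^ a := pow_le_pow_of_le_one h0.le h1.le (by omega)
  have h4 : z.1 ^ a < 1 := pow_lt_one₀ h0.le h1 ha.ne'
  by_contra h
  push Not at h
  nlinarith

lemma region_eq (a b : ℕ) (ha : 0 < a) (hab : a < b) :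
    {pq : ℝ × ℝ | pq ∈ bacT ∧ 0 < bacS pq.1 pq.2 ∧ bacS pq.1 pq.2 < (a : ℝ) / (b : ℝ)}
      = Set.image (bacF b) (bacD a b) := by
  have hb : 0 < b := by omega
  ext ⟨p, q⟩
  constructor
  · rintro ⟨⟨hp, hpq, hs, -⟩, hS, hS'⟩
    simp only at *
    have hp0 : p ≠ 0 := by
      rintro rfl
      simp [bacS] at hS
    have hp : 0 < p := lt_of_le_of_ne hp hp0.symm
    have hq : 0 < 1 - q := by linarith
    set x : ℝ := (p / (1 - q)) ^ ((b : ℝ)⁻¹) with hx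
    have hxb : x ^ b = p / (1 - q) := Real.rpow_inv_natCast_pow (by positivity) hb.ne'
    have hx0 : 0 < x := by positivity
    have hx1 : x < 1 := Real.rpow_lt_one (by positivity) ((div_lt_one hq).2 (by linarith))
      (by positivity)
    have hpe : (1 - q) * x ^ b = p := by rw [hxb]; field_simp
    have := (bacS_lt_iff a b ha hb x (1 - q) hx0 hx1 hq (by linarith)).2
    rw [hpe, sub_sub_cancel] at this
    refine ⟨(x, 1 - q), ⟨hx0, hx1, hq, this.1 hS'⟩, ?_⟩
    simp [bacF, hpe]
  · rintro ⟨⟨x, s⟩, hz, h⟩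
    have hs1 := bacD_lt_one a b _ hz ha
    obtain ⟨hx0, hx1, hs0, h3⟩ := hz
    simp only [bacF, Prod.mk.injEq] at *
    obtain ⟨rfl, rfl⟩ := h
    obtain ⟨hS, hS'⟩ := bacS_lt_iff a b ha hb x s hx0 hx1 hs0 hs1
    refine ⟨⟨by positivity, ?_, ?_, ?_⟩, hS, hS'.2 h3⟩
    · simp only
      have hba : x ^ b ≤ x ^ a := pow_le_pow_of_le_one hx0.le hx1.le hab.le
      have hxb1 : x ^ b < 1 := pow_lt_one₀ hx0.le hx1 hb.ne'
      have hxb0 : 0 < x ^ b := by positivity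
      rw [pow_add] at h3
      have hps : s * x ^ b < s := by nlinarith
      have k1 : (1 - s * x ^ b) * x ^ b < 1 - s := by nlinarith
      have k2 := mul_lt_mul_of_pos_left k1 hs0
      by_contra hc
      push Not at hc
      nlinarith
    · simp only
      have hxb1 : x ^ b < 1 := pow_lt_one₀ hx0.le hx1 hb.ne'
      nlinarith
    · intro h
      simp only [Prod.mk.injEq] at h
      linarith [h.2]

noncomputable def bacF' (b : ℕ) (z : ℝ × ℝ) : ℝ × ℝ →L[ℝ] ℝ × ℝ :=
  LinearMap.toContinuousLinearMap (Matrix.toLin (Module.Basis.finTwoProd ℝ)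
    (Module.Basis.finTwoProd ℝ) !![z.2 * (b * z.1 ^ (b - 1)), z.1 ^ b; 0, -1])

lemma bacF'_det (b : ℕ) (z : ℝ × ℝ) : (bacF' b z).det = -(z.2 * (b * z.1 ^ (b - 1))) := by
  simp [bacF', ContinuousLinearMap.det, Matrix.det_fin_two]

lemma bacF_hasFDerivAt (b : ℕ) (z : ℝ × ℝ) : HasFDerivAt (bacF b) (bacF' b z) z := by
  unfold bacF' bacF
  rw [Matrix.toLin_finTwoProd_toContinuousLinearMap]
  have h1 : HasFDerivAt (fun z : ℝ × ℝ => z.1) (ContinuousLinearMap.fst ℝ ℝ ℝ) z := hasFDerivAt_fst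
  have h2 : HasFDerivAt (fun z : ℝ × ℝ => z.2) (ContinuousLinearMap.snd ℝ ℝ ℝ) z := hasFDerivAt_snd
  refine HasFDerivAt.congr_fderiv ((h2.mul (h1.pow b)).prodMk (h2.const_sub 1)) ?_
  ext <;> simp

lemma bacF_inj (a b : ℕ) (hb : 0 < b) : InjOn (bacF b) (bacD a b) := by
  rintro ⟨x, s⟩ ⟨hx0, hx1, hs0, -⟩ ⟨y, t⟩ ⟨hy0, hy1, ht0, -⟩ h
  simp only [bacF, Prod.mk.injEq] at *
  obtain ⟨h1, h2⟩ := h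
  have : s = t := by linarith
  subst this
  refine ⟨?_, rfl⟩
  have := mul_left_cancel₀ hs0.ne' h1
  exact (pow_left_inj₀ hx0.le hy0.le hb.ne').1 this

lemma bacD_meas (a b : ℕ) : MeasurableSet (bacD a b) := by
  unfold bacD
  have h1 : MeasurableSet {z : ℝ × ℝ | 0 < z.1} := measurableSet_lt (by fun_prop) (by fun_prop)
  have h2 : MeasurableSet {z : ℝ × ℝ | z.1 < 1} := measurableSet_lt (by fun_prop) (by fun_prop)
  have h3 : MeasurableSet {z : ℝ × ℝ | 0 < z.2} := measurableSet_lt (by fun_prop) (by fun_prop)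
  have h4 : MeasurableSet {z : ℝ × ℝ | z.2 * (1 - z.1 ^ (a + b)) < 1 - z.1 ^ a} :=
    measurableSet_lt (by fun_prop) (by fun_prop)
  exact h1.inter (h2.inter (h3.inter h4))

lemma inner_lint (c σ : ℝ) (hc : 0 ≤ c) (hσ : 0 ≤ σ) :
    ∫⁻ s in Ioo 0 σ, ENNReal.ofReal (c * s) = ENNReal.ofReal (c * (σ ^ 2 / 2)) := by
  rw [← MeasureTheory.ofReal_integral_eq_lintegral_ofReal]
  · rw [← MeasureTheory.integral_Ioc_eq_integral_Ioo, ← intervalIntegral.integral_of_le hσ]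
    rw [intervalIntegral.integral_const_mul, integral_id]; ring_nf
  · exact ((by fun_prop : Continuous fun s : ℝ => c * s).integrableOn_Icc).mono_set Ioo_subset_Icc_self
  · refine (MeasureTheory.ae_restrict_iff' measurableSet_Ioo).2 (Filter.Eventually.of_forall ?_)
    intro s hs
    exact mul_nonneg hc hs.1.le

theorem stmt16 (a b : ℕ) (ha : 0 < a) (hab : a < b) (hcop : Nat.Coprime a b) :
    MeasureTheory.volume
        {pq : ℝ × ℝ | pq ∈ bacT ∧ 0 < bacS pq.1 pq.2 ∧ bacS pq.1 pq.2 < (a : ℝ) / (b : ℝ)}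
      = ENNReal.ofReal
          (∫ x in (0 : ℝ)..1,
            (b : ℝ) * (x ^ a - 1) ^ 2 * x ^ (b - 1) / (2 * (x ^ (a + b) - 1) ^ 2)) := by
  have hb : 0 < b := by omega
  rw [region_eq a b ha hab, ← MeasureTheory.lintegral_abs_det_fderiv_eq_addHaar_image _
    (bacD_meas a b) (fun z _ => (bacF_hasFDerivAt b z).hasFDerivWithinAt) (bacF_inj a b hb)]
  have e1 : ∫⁻ z in bacD a b, ENNReal.ofReal |(bacF' b z).det|
      = ∫⁻ z in bacD a b, ENNReal.ofReal (b * z.1 ^ (b - 1) * z.2) := by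
    refine MeasureTheory.setLIntegral_congr_fun (bacD_meas a b) ?_
    rintro z ⟨h0, -, h2, -⟩
    simp only
    rw [bacF'_det, abs_neg, abs_of_nonneg (by positivity), mul_comm]
  rw [e1, ← MeasureTheory.lintegral_indicator (bacD_meas a b), MeasureTheory.Measure.volume_eq_prod,
    MeasureTheory.lintegral_prod]
  swap
  · exact (Measurable.indicator (by fun_prop) (bacD_meas a b)).aemeasurable
  have e2 : ∀ x : ℝ, ∫⁻ s, (bacD a b).indicator
        (fun z : ℝ × ℝ => ENNReal.ofReal (b * z.1 ^ (b - 1) * z.2)) (x, s)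
      = (Ioo (0:ℝ) 1).indicator (fun x => ENNReal.ofReal
        ((b : ℝ) * (x ^ a - 1) ^ 2 * x ^ (b - 1) / (2 * (x ^ (a + b) - 1) ^ 2))) x := by
    intro x
    by_cases hx : x ∈ Ioo (0:ℝ) 1
    · rw [indicator_of_mem hx]
      have h1 : x ^ (a + b) < 1 := pow_lt_one₀ hx.1.le hx.2 (by omega)
      have h2 : x ^ a < 1 := pow_lt_one₀ hx.1.le hx.2 (by omega)
      have hx0 := hx.1
      have := inner_lint (b * x ^ (b - 1)) ((1 - x ^ a) / (1 - x ^ (a + b))) (by positivity)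
        (div_nonneg (by linarith) (by linarith))
      rw [← MeasureTheory.lintegral_indicator measurableSet_Ioo] at this
      convert this using 2
      · ext s
        have hm : (x, s) ∈ bacD a b ↔ s ∈ Ioo 0 ((1 - x ^ a) / (1 - x ^ (a + b))) := by
          simp only [bacD, mem_setOf_eq, mem_Ioo, lt_div_iff₀ (sub_pos.2 h1), hx.1, hx.2, true_and]
        simp only [indicator, hm]
      · have : (x ^ (a + b) - 1) ≠ 0 := by linarith
        have : (1 - x ^ (a + b)) ≠ 0 := by linarith
        rw [div_pow, ← neg_sub 1 (x ^ (a + b)), ← neg_sub 1 (x ^ a), neg_sq, neg_sq]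
        field_simp
    · rw [indicator_of_notMem hx]
      have : ∀ s, (x, s) ∉ bacD a b := fun s hs => hx ⟨hs.1, hs.2.1⟩
      simp [indicator, this]
  simp_rw [e2]
  rw [MeasureTheory.lintegral_indicator measurableSet_Ioo,
    intervalIntegral.integral_of_le zero_le_one, MeasureTheory.integral_Ioc_eq_integral_Ioo,
    MeasureTheory.ofReal_integral_eq_lintegral_ofReal]
  · refine MeasureTheory.Measure.integrableOn_of_bounded (M := b) (by simp)
      (Measurable.aestronglyMeasurable (by fun_prop)) ?_
    refine (MeasureTheory.ae_restrict_iff' measurableSet_Ioo).2 (Filter.Eventually.of_forall ?_)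
    intro x hx
    have hx0 := hx.1
    have h1 : x ^ (a + b) < 1 := pow_lt_one₀ hx.1.le hx.2 (by omega)
    have h2 : x ^ (a + b) ≤ x ^ a := pow_le_pow_of_le_one hx.1.le hx.2.le (by omega)
    have h2' : x ^ a ≤ 1 := pow_le_one₀ hx.1.le hx.2.le
    have h3 : x ^ (b - 1) ≤ 1 := pow_le_one₀ hx.1.le hx.2.le
    have h5 : 0 < (x ^ (a + b) - 1) ^ 2 := by nlinarith
    have h4 : (x ^ a - 1) ^ 2 ≤ (x ^ (a + b) - 1) ^ 2 := by nlinarith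
    rw [Real.norm_of_nonneg (by positivity), div_le_iff₀ (by positivity)]
    have h6 : (x ^ a - 1) ^ 2 * x ^ (b - 1) ≤ (x ^ (a + b) - 1) ^ 2 * 1 := by gcongr
    have hb' : (0:ℝ) < b := by exact_mod_cast hb
    nlinarith
  · refine (MeasureTheory.ae_restrict_iff' measurableSet_Ioo).2 (Filter.Eventually.of_forall ?_)
    intro x hx
    have hx0 := hx.1
    simp only [Pi.zero_apply]
    positivity
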